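/- Let $\omega \in A_1$, $d\mu = \omega\,dx$, and $0 < r < 1$. Suppose $f$ is locally integrable with $\sup_Q \inf_c \left(\frac{1}{\mu(Q)}\int_Q \left(\frac{|f(x)-c|}{\omega(x)}\right)^r d\mu(x)\right)^{1/r} = 1$, and for each cube $Q$ let $c_Q$ minimize $\int_Q (|f(x)-c|/\omega(x))^r d\mu(x)$. Then there exist positive constants $c_1, c_2$ (depending only on $n$, $r$, and $[\omega]_{A_1}$) such that for all cubes $Q$ and all $t > 0$, $\mu(\{x \in Q : |f(x)-c_Q|/\omega(x) > t\}) \leq c_1 e^{-c_2 t}\,\mu(Q)$. -/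

import Mathlib

open MeasureTheory Real
noncomputable section

abbrev Rn (n : ℕ) := EuclideanSpace ℝ (Fin n)

def cube {n : ℕ} (c : Rn n) (r : ℝ) : Set (Rn n) := {y | ∀ i, |y i - c i| ≤ r / 2}

def wMeas {n : ℕ} (ω : Rn n → ℝ) (S : Set (Rn n)) : ℝ := ∫ x in S, ω x

def avg {n : ℕ} (f : Rn n → ℝ) (c : Rn n) (r : ℝ) : ℝ := (∫ x in cube c r, f x) / r ^ n

def IsA1 {n : ℕ} (ω : Rn n → ℝ) (A : ℝ) : Prop :=
  (∀ x, 0 < ω x) ∧ LocallyIntegrable ω volume ∧ 1 ≤ A ∧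
  ∀ (c : Rn n) (r : ℝ), 0 < r →
    ∀ᵐ x ∂(volume : Measure (Rn n)), x ∈ cube c r → wMeas ω (cube c r) / r ^ n ≤ A * ω x

def IsAp {n : ℕ} (ω : Rn n → ℝ) (p A : ℝ) : Prop :=
  (∀ x, 0 < ω x) ∧ LocallyIntegrable ω volume ∧
  ∀ (c : Rn n) (r : ℝ), 0 < r →
    (wMeas ω (cube c r) / r ^ n) *
      ((∫ x in cube c r, ω x ^ (-(1 / (p - 1)))) / r ^ n) ^ (p - 1) ≤ A

def IsAinf {n : ℕ} (ω : Rn n → ℝ) : Prop := ∃ p A, 1 < p ∧ IsAp ω p A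

/-!
A Calderón–Zygmund argument for sup-norm balls, i.e. cubes. For an `A₁` weight the measures `dx` and
`dμ = ω dx` are comparable on subsets of a ball: a set of small `μ`-density has small Lebesgue
density, and a set filling a fixed proportion of the ball in the sense of `dx` does so in the sense
of `dμ`. By Chebyshev's inequality, the oscillation bound gives a small tail at some height `s`: in
every ball the set `|f - c_Q| > s ω` has at most the proportion `δ` of the `μ`-measure.

If `a` and `b` are both good values for `f` on a ball, then `|a - b| ≤ 2 s ω` on half of it, so
`|a - b|` is controlled by the average of `ω`, and by `A₁` one has `|a - b| ≤ 4 A s ω` almost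
everywhere. Now select balls on which `|f - c_Q| > s ω` fills a fixed proportion while it does not
on the dilated balls. Their total `μ`-measure is at most `C δ μ(Q)`, their values differ from `c_Q`
by at most `8 A s ω`, and outside them the deviation is at most `s ω`. Hence raising the height by
`8 A s` multiplies the tail by `C δ ≤ 1 / 2`, and iterating gives exponential decay.
-/

section

open Metric Set Filter Topology
open scoped ENNReal NNReal

/-! ### Doubling measures and Calderón–Zygmund balls -/

section Doubling

variable {X : Type*} [PseudoMetricSpace X] [MeasurableSpace X] {ν : Measure X} {D : ℝ≥0}

/-- A globally doubling measure with doubling constant `D`. Mathlib's `IsUnifLocDoublingMeasure`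
only controls small radii, while the self-improvement of the tail estimate uses all scales. -/
def IsDoubling (ν : Measure X) (D : ℝ≥0) : Prop :=
  ∀ x r, 0 < r → ν (closedBall x (2 * r)) ≤ D * ν (closedBall x r)

namespace IsDoubling

lemma isUnifLocDoublingMeasure (hD : IsDoubling ν D) : IsUnifLocDoublingMeasure ν :=
  ⟨D, eventually_mem_nhdsWithin.mono fun r hr x => hD x r hr⟩

lemma measure_closedBall_four_mul_le (hD : IsDoubling ν D) (x : X) {r : ℝ} (hr : 0 < r) :
    ν (closedBall x (4 * r)) ≤ D ^ 2 * ν (closedBall x r) :=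
  calc ν (closedBall x (4 * r)) = ν (closedBall x (2 * (2 * r))) := by ring_nf
    _ ≤ D * ν (closedBall x (2 * r)) := hD x _ (by positivity)
    _ ≤ D * (D * ν (closedBall x r)) := by gcongr; exact hD x r hr
    _ = D ^ 2 * ν (closedBall x r) := by ring

lemma one_le [Nonempty X] [ProperSpace X] [IsFiniteMeasureOnCompacts ν] [ν.IsOpenPosMeasure]
    (hD : IsDoubling ν D) : 1 ≤ D := by
  obtain ⟨x⟩ := ‹Nonempty X›
  have hle : 1 * ν (closedBall x 1) ≤ D * ν (closedBall x 1) := by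
    rw [one_mul]
    exact (measure_mono (closedBall_subset_closedBall (by norm_num))).trans (hD x 1 one_pos)
  rw [ENNReal.mul_le_mul_iff_left (measure_closedBall_pos ν x one_pos).ne'
    measure_closedBall_lt_top.ne] at hle
  exact_mod_cast hle

end IsDoubling

lemma isDoubling_volume_pi (ι : Type*) [Fintype ι] :
    IsDoubling (volume : Measure (ι → ℝ)) (2 ^ Fintype.card ι) := by
  intro x r hr
  rw [Real.volume_pi_closedBall x (by positivity), Real.volume_pi_closedBall x hr.le,
    mul_pow 2 (2 * r), ENNReal.ofReal_mul (by positivity), ENNReal.ofReal_pow zero_le_two]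
  simp

end Doubling

section Covering

variable {X : Type*} [PseudoMetricSpace X] [MeasurableSpace X] {ν : Measure X} {θ : ℝ≥0∞}

lemma ae_exists_mul_measure_closedBall_lt [SecondCountableTopology X] [BorelSpace X]
    [IsLocallyFiniteMeasure ν] [IsUnifLocDoublingMeasure ν] (E : Set X) (hθ : θ < 1)
    {r : ℕ → ℝ} (hr : Tendsto r atTop (𝓝[>] 0)) :
    ∀ᵐ x ∂ν.restrict E, ∃ k, θ * ν (closedBall x (r k)) < ν (E ∩ closedBall x (r k)) := by
  filter_upwards [IsUnifLocDoublingMeasure.ae_tendsto_measure_inter_div ν E 1] with x hx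
  have hmem : ∀ᶠ k in atTop, x ∈ closedBall x (1 * r k) := by
    filter_upwards [hr.eventually self_mem_nhdsWithin] with k hk
    exact mem_closedBall_self (by simpa using (mem_Ioi.1 hk).le)
  obtain ⟨k, hk⟩ := ((hx _ r hr hmem).eventually (lt_mem_nhds hθ)).exists
  exact ⟨k, ENNReal.mul_lt_of_lt_div hk⟩

lemma tendsto_div_four_pow {R : ℝ} (hR : 0 < R) :
    Tendsto (fun k : ℕ => R / 4 ^ k) atTop (𝓝[>] 0) := by
  refine tendsto_nhdsWithin_iff.2 ⟨?_, .of_forall fun k => mem_Ioi.2 (by positivity)⟩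
  exact tendsto_const_nhds.div_atTop (tendsto_pow_atTop_atTop_of_one_lt (by norm_num))

lemma exists_stopping_radius {E : Set X} {x : X} {R : ℝ} (hR : 0 < R)
    (hsmall : ν (E ∩ closedBall x R) ≤ θ * ν (closedBall x R))
    (hlarge : ∃ k : ℕ, θ * ν (closedBall x (R / 4 ^ k)) < ν (E ∩ closedBall x (R / 4 ^ k))) :
    ∃ ρ, 0 < ρ ∧ 4 * ρ ≤ R ∧
      ν (E ∩ closedBall x (4 * ρ)) ≤ θ * ν (closedBall x (4 * ρ)) ∧
      θ * ν (closedBall x ρ) ≤ ν (E ∩ closedBall x ρ) := by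
  obtain ⟨k, hk, hk'⟩ :=
    Nat.exists_not_and_succ_of_not_zero_of_exists (by simpa using hsmall) hlarge
  have hparent : 4 * (R / 4 ^ (k + 1)) = R / 4 ^ k := by field_simp; ring
  refine ⟨R / 4 ^ (k + 1), by positivity, ?_, ?_, hk'.le⟩
  · exact hparent.trans_le (div_le_self hR.le (one_le_pow₀ (by norm_num)))
  · rw [hparent]
    exact not_lt.1 hk

/-- Calderón–Zygmund balls for a set `E` at density level `θ`, centred in `s`: pairwise disjoint
balls `closedBall b (ρ b)`, `b ∈ u`, that `E` fills at least to the proportion `θ`, whose fourfold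
dilates `E` fills at most to the proportion `θ` and cover `E ∩ s` up to a null set. They replace
the maximal dyadic subcubes of the classical decomposition. -/
structure IsCZCover (ν : Measure X) (θ : ℝ≥0∞) (E s : Set X) (R : ℝ) (u : Set X) (ρ : X → ℝ) :
    Prop where
  countable : u.Countable
  center_mem : ∀ b ∈ u, b ∈ s
  radius_pos : ∀ b ∈ u, 0 < ρ b
  four_mul_radius_le : ∀ b ∈ u, 4 * ρ b ≤ R
  pairwiseDisjoint : u.PairwiseDisjoint fun b => closedBall b (ρ b)
  le_density : ∀ b ∈ u, θ * ν (closedBall b (ρ b)) ≤ ν (E ∩ closedBall b (ρ b))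
  density_le : ∀ b ∈ u,
    ν (E ∩ closedBall b (4 * ρ b)) ≤ θ * ν (closedBall b (4 * ρ b))
  ae_covered : ∀ᵐ x ∂ν, x ∈ E ∩ s → ∃ b ∈ u, x ∈ closedBall b (4 * ρ b)

theorem exists_isCZCover [SecondCountableTopology X] [BorelSpace X] [IsLocallyFiniteMeasure ν]
    [IsUnifLocDoublingMeasure ν] (hθ : θ < 1) {E s : Set X} {R : ℝ} (hR : 0 < R)
    (hsmall : ∀ x ∈ s, ν (E ∩ closedBall x R) ≤ θ * ν (closedBall x R)) :
    ∃ u ρ, IsCZCover ν θ E s R u ρ := by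
  set dense : Set X :=
    {x | ∃ k : ℕ, θ * ν (closedBall x (R / 4 ^ k)) < ν (E ∩ closedBall x (R / 4 ^ k))}
  choose! ρ hρ_pos hρ_le hρ_small hρ_large using
    fun x (hx : x ∈ s ∩ dense) => exists_stopping_radius hR (hsmall x hx.1) hx.2
  have hρR : ∀ x ∈ s ∩ dense, ρ x ≤ R := fun x hx => by linarith [hρ_pos x hx, hρ_le x hx]
  obtain ⟨u, hu, hdisj, hcover⟩ := Vitali.exists_disjoint_subfamily_covering_enlargement_closedBall
    (s ∩ dense) id ρ R hρR 4 (by norm_num)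
  refine ⟨u, ρ, ?_, fun b hb => (hu hb).1, fun b hb => hρ_pos b (hu hb),
    fun b hb => hρ_le b (hu hb), hdisj, fun b hb => hρ_large b (hu hb),
    fun b hb => hρ_small b (hu hb), ?_⟩
  · exact hdisj.countable_of_nonempty_interior fun b hb =>
      ⟨b, ball_subset_interior_closedBall (mem_ball_self (hρ_pos b (hu hb)))⟩
  · filter_upwards [ae_imp_of_ae_restrict
      (ae_exists_mul_measure_closedBall_lt (E ∩ s) hθ (tendsto_div_four_pow hR))] with x hx hxEs
    obtain ⟨k, hk⟩ := hx hxEs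
    have hxd : x ∈ s ∩ dense :=
      ⟨hxEs.2, k, hk.trans_le (measure_mono (inter_subset_inter_left _ inter_subset_left))⟩
    obtain ⟨b, hb, hsub⟩ := hcover x hxd
    exact ⟨b, hb, hsub (mem_closedBall_self (hρ_pos x hxd).le)⟩

end Covering

/-! ### `A₁` weights -/

section Weight

variable {X : Type*} [PseudoMetricSpace X] [MeasurableSpace X] {ν : Measure X} {ω : X → ℝ≥0∞}
  {A D : ℝ≥0}

/-- Muckenhoupt's class `A₁` on a metric measure space, with respect to closed balls, for a weight
with values in `ℝ≥0∞`. The inequality with the essential infimum of `ω` over a ball is stated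
almost everywhere on that ball. -/
structure IsA1Weight (ν : Measure X) (ω : X → ℝ≥0∞) (A : ℝ≥0) : Prop where
  aemeasurable : AEMeasurable ω ν
  ae_ne_zero : ∀ᵐ x ∂ν, ω x ≠ 0
  measure_closedBall_ne_top : ∀ x r, ν.withDensity ω (closedBall x r) ≠ ∞
  ae_measure_closedBall_le : ∀ x r, 0 < r → ∀ᵐ y ∂ν, y ∈ closedBall x r →
    ν.withDensity ω (closedBall x r) ≤ A * ω y * ν (closedBall x r)

namespace IsA1Weight

lemma measure_closedBall_ne_zero [ν.IsOpenPosMeasure] (hω : IsA1Weight ν ω A) (x : X) {r : ℝ}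
    (hr : 0 < r) : ν.withDensity ω (closedBall x r) ≠ 0 := fun h =>
  (measure_closedBall_pos ν x hr).ne'
    (withDensity_absolutelyContinuous' hω.aemeasurable hω.ae_ne_zero h)

variable [ProperSpace X] [BorelSpace X] [IsLocallyFiniteMeasure ν]

lemma measure_inter_mul_measure_closedBall_le (hω : IsA1Weight ν ω A) (E : Set X) (x : X) {r : ℝ}
    (hr : 0 < r) :
    ν (E ∩ closedBall x r) * ν.withDensity ω (closedBall x r) ≤
      A * ν.withDensity ω (E ∩ closedBall x r) * ν (closedBall x r) := by
  set B := closedBall x r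
  have hB : ∀ᵐ y ∂ν.restrict (E ∩ B), ν.withDensity ω B ≤ A * ν B * ω y := by
    refine ae_restrict_of_ae_restrict_of_subset inter_subset_right ?_
    rw [ae_restrict_iff' measurableSet_closedBall]
    filter_upwards [hω.ae_measure_closedBall_le x r hr] with y hy hyB
    exact (hy hyB).trans_eq (by ring)
  calc ν (E ∩ B) * ν.withDensity ω B = ∫⁻ _ in E ∩ B, ν.withDensity ω B ∂ν := by
        rw [setLIntegral_const, mul_comm]
    _ ≤ ∫⁻ y in E ∩ B, A * ν B * ω y ∂ν := lintegral_mono_ae hB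
    _ = A * ν B * ν.withDensity ω (E ∩ B) := by
        rw [lintegral_const_mul' _ _
          (ENNReal.mul_ne_top ENNReal.coe_ne_top measure_closedBall_lt_top.ne),
          withDensity_apply' ω]
    _ = A * ν.withDensity ω (E ∩ B) * ν B := by ring

lemma mul_measure_closedBall_le_of_le_density [ν.IsOpenPosMeasure] (hω : IsA1Weight ν ω A)
    {E : Set X} {x : X} {r : ℝ} (hr : 0 < r) {θ : ℝ≥0∞}
    (hE : θ * ν (closedBall x r) ≤ ν (E ∩ closedBall x r)) :
    θ * ν.withDensity ω (closedBall x r) ≤ A * ν.withDensity ω (E ∩ closedBall x r) := by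
  rw [← ENNReal.mul_le_mul_iff_left (measure_closedBall_pos ν x hr).ne'
    measure_closedBall_lt_top.ne]
  calc θ * ν.withDensity ω (closedBall x r) * ν (closedBall x r)
      = θ * ν (closedBall x r) * ν.withDensity ω (closedBall x r) := by ring
    _ ≤ ν (E ∩ closedBall x r) * ν.withDensity ω (closedBall x r) := by gcongr
    _ ≤ _ := hω.measure_inter_mul_measure_closedBall_le E x hr

lemma measure_inter_le_of_withDensity_inter_le [ν.IsOpenPosMeasure] (hω : IsA1Weight ν ω A)
    {E : Set X} {x : X} {r : ℝ} (hr : 0 < r) {δ : ℝ≥0∞}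
    (hE : ν.withDensity ω (E ∩ closedBall x r) ≤ δ * ν.withDensity ω (closedBall x r)) :
    ν (E ∩ closedBall x r) ≤ A * δ * ν (closedBall x r) := by
  rw [← ENNReal.mul_le_mul_iff_left (hω.measure_closedBall_ne_zero x hr)
    (hω.measure_closedBall_ne_top x r)]
  calc ν (E ∩ closedBall x r) * ν.withDensity ω (closedBall x r)
      ≤ A * ν.withDensity ω (E ∩ closedBall x r) * ν (closedBall x r) :=
        hω.measure_inter_mul_measure_closedBall_le E x hr
    _ ≤ A * (δ * ν.withDensity ω (closedBall x r)) * ν (closedBall x r) := by gcongr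
    _ = _ := by ring

lemma one_le [Nonempty X] [ν.IsOpenPosMeasure] (hω : IsA1Weight ν ω A) : 1 ≤ A := by
  obtain ⟨x⟩ := ‹Nonempty X›
  have hle : 1 * ν.withDensity ω (closedBall x 1) ≤ A * ν.withDensity ω (closedBall x 1) := by
    simpa using hω.mul_measure_closedBall_le_of_le_density (E := univ) (x := x) one_pos (θ := 1)
      (by simp)
  rw [ENNReal.mul_le_mul_iff_left (hω.measure_closedBall_ne_zero x one_pos)
    (hω.measure_closedBall_ne_top x 1)] at hle
  exact_mod_cast hle

lemma isDoubling_withDensity [ν.IsOpenPosMeasure] (hω : IsA1Weight ν ω A)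
    (hD : IsDoubling ν D) : IsDoubling (ν.withDensity ω) (A * D) := by
  intro x r hr
  have hsub : closedBall x r ⊆ closedBall x (2 * r) := closedBall_subset_closedBall (by linarith)
  rw [← ENNReal.mul_le_mul_iff_left (measure_closedBall_pos ν x hr).ne'
    measure_closedBall_lt_top.ne]
  have hle := hω.measure_inter_mul_measure_closedBall_le (closedBall x r) x
    (r := 2 * r) (by positivity)
  rw [inter_eq_left.2 hsub] at hle
  calc ν.withDensity ω (closedBall x (2 * r)) * ν (closedBall x r)
      = ν (closedBall x r) * ν.withDensity ω (closedBall x (2 * r)) := mul_comm _ _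
    _ ≤ A * ν.withDensity ω (closedBall x r) * ν (closedBall x (2 * r)) := hle
    _ ≤ A * ν.withDensity ω (closedBall x r) * (D * ν (closedBall x r)) := by
        gcongr; exact hD x r hr
    _ = _ := by push_cast; ring

end IsA1Weight

end Weight

/-! ### Self-improvement of tail estimates -/

section Deviation

variable {X Y : Type*} [PseudoEMetricSpace Y] {ω : X → ℝ≥0∞} {f : X → Y} {a b : Y}
  {s t : ℝ≥0∞} {x : X}

/-- The set where `f` deviates from the value `a` by more than `t`, measured relative to the
weight `ω`; this is `{|f - a| / ω > t}` without the division. -/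
def deviationSet (ω : X → ℝ≥0∞) (f : X → Y) (a : Y) (t : ℝ≥0∞) : Set X :=
  {x | t * ω x < edist (f x) a}

lemma deviationSet_anti (hst : s ≤ t) : deviationSet ω f a t ⊆ deviationSet ω f a s := fun x hx =>
  (mul_le_mul_left hst (ω x)).trans_lt hx

lemma mem_deviationSet_of_edist_le (hx : x ∈ deviationSet ω f a (t + s))
    (hab : edist a b ≤ s * ω x) : x ∈ deviationSet ω f b t := by
  by_contra hxb
  have hfa : edist (f x) a ≤ (t + s) * ω x :=
    calc edist (f x) a ≤ edist (f x) b + edist a b := edist_triangle_right _ _ _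
      _ ≤ t * ω x + s * ω x := add_le_add (not_lt.1 hxb) hab
      _ = (t + s) * ω x := (add_mul _ _ _).symm
  exact hfa.not_gt hx

lemma measure_le_two_mul_measure_inter [MeasurableSpace X] {ν : Measure X} {B G E₁ E₂ : Set X}
    (hB : ν B ≠ ∞) (hcover : B ⊆ G ∪ (E₁ ∪ E₂)) (h₁ : ν (E₁ ∩ B) ≤ 4⁻¹ * ν B)
    (h₂ : ν (E₂ ∩ B) ≤ 4⁻¹ * ν B) : ν B ≤ 2 * ν (G ∩ B) := by
  have hhalf : (4⁻¹ + 4⁻¹ : ℝ≥0∞) = 2⁻¹ := by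
    rw [← two_mul, show (4 : ℝ≥0∞) = 2 * 2 by norm_num, ENNReal.mul_inv (by simp) (by simp),
      ← mul_assoc, ENNReal.mul_inv_cancel two_ne_zero ENNReal.ofNat_ne_top, one_mul]
  have hcoverB : B ⊆ G ∩ B ∪ (E₁ ∩ B ∪ E₂ ∩ B) := by
    rw [← union_inter_distrib_right, ← union_inter_distrib_right]
    exact subset_inter hcover subset_rfl
  rw [← ENNReal.inv_mul_le_iff two_ne_zero ENNReal.ofNat_ne_top]
  have hhalfB : 2⁻¹ * ν B ≠ ∞ := ENNReal.mul_ne_top (by simp) hB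
  refine ENNReal.le_of_add_le_add_right hhalfB ?_
  calc 2⁻¹ * ν B + 2⁻¹ * ν B = ν B := by rw [← add_mul, ENNReal.inv_two_add_inv_two, one_mul]
    _ ≤ ν (G ∩ B) + (ν (E₁ ∩ B) + ν (E₂ ∩ B)) :=
      (measure_mono hcoverB).trans
        ((measure_union_le _ _).trans (by gcongr; exact measure_union_le _ _))
    _ ≤ ν (G ∩ B) + (4⁻¹ * ν B + 4⁻¹ * ν B) := by gcongr
    _ = ν (G ∩ B) + 2⁻¹ * ν B := by rw [← add_mul, hhalf]

lemma edist_mul_measure_le [MeasurableSpace X] {ν : Measure X} [SFinite ν]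
    (hω : AEMeasurable ω ν) {B : Set X} (hB : ν B ≠ ∞)
    (ha : ν (deviationSet ω f a t ∩ B) ≤ 4⁻¹ * ν B)
    (hb : ν (deviationSet ω f b t ∩ B) ≤ 4⁻¹ * ν B) :
    edist a b * ν B ≤ 4 * t * ν.withDensity ω B := by
  set G : Set X := {x | edist a b ≤ 2 * t * ω x}
  have hcover : B ⊆ G ∪ (deviationSet ω f a t ∪ deviationSet ω f b t) := by
    intro x _
    by_contra! hx
    simp only [mem_union, not_or] at hx
    refine hx.1 ?_
    calc edist a b ≤ edist (f x) a + edist (f x) b := edist_triangle_left _ _ _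
      _ ≤ t * ω x + t * ω x := add_le_add (not_lt.1 hx.2.1) (not_lt.1 hx.2.2)
      _ = 2 * t * ω x := by ring
  calc edist a b * ν B ≤ edist a b * (2 * ν.restrict B G) := by
        gcongr
        refine (measure_le_two_mul_measure_inter hB hcover ha hb).trans ?_
        gcongr 2 * ?_
        exact Measure.le_restrict_apply B G
    _ = 2 * (edist a b * ν.restrict B G) := by ring
    _ ≤ 2 * ∫⁻ x in B, 2 * t * ω x ∂ν := by
        gcongr
        exact mul_meas_ge_le_lintegral₀ (hω.restrict.const_mul _) _
    _ = 4 * t * ν.withDensity ω B := by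
        rw [lintegral_const_mul'' _ hω.restrict, withDensity_apply' ω]
        ring

end Deviation

section TailBound

variable {X Y : Type*} [PseudoMetricSpace X] [MeasurableSpace X] [PseudoEMetricSpace Y]
  {ν : Measure X} {ω : X → ℝ≥0∞} {A D : ℝ≥0} {f : X → Y} {a : X → ℝ → Y} {s t δ q : ℝ≥0∞}

/-- Uniform tail estimate at height `t`: on every ball `B`, the weighted measure of the part where
`f` deviates from the value `a` assigned to `B` by more than `t` is at most `q` times that
of `B`. The value is given as a function of the centre and the radius of the ball. -/
def TailBound (ν : Measure X) (ω : X → ℝ≥0∞) (f : X → Y) (a : X → ℝ → Y) (t q : ℝ≥0∞) : Prop :=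
  ∀ x r, 0 < r → ν.withDensity ω (deviationSet ω f (a x r) t ∩ closedBall x r) ≤
    q * ν.withDensity ω (closedBall x r)

lemma TailBound.mono {s' q' : ℝ≥0∞} (h : TailBound ν ω f a s q) (hs : s ≤ s') (hq : q ≤ q') :
    TailBound ν ω f a s' q' := fun x r hr =>
  (measure_mono (inter_subset_inter_left _ (deviationSet_anti hs))).trans
    ((h x r hr).trans (by gcongr))

lemma tailBound_zero_one : TailBound ν ω f a 0 1 := fun _ _ _ => by
  rw [one_mul]
  exact measure_mono inter_subset_right

lemma tailBound_of_lintegral_rpow_le {p : ℝ} (hp : 0 < p) (ht : t ≠ 0) (ht' : t ≠ ∞)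
    (hmeas : ∀ x r, 0 < r → AEMeasurable (fun y => (edist (f y) (a x r) / ω y) ^ p)
      ((ν.withDensity ω).restrict (closedBall x r)))
    (hosc : ∀ x r, 0 < r → ∫⁻ y in closedBall x r, (edist (f y) (a x r) / ω y) ^ p
      ∂ν.withDensity ω ≤ ν.withDensity ω (closedBall x r)) :
    TailBound ν ω f a t (t ^ p)⁻¹ := by
  intro x r hr
  set μ := ν.withDensity ω
  set B := closedBall x r
  have hsub : deviationSet ω f (a x r) t ⊆ {y | t ^ p ≤ (edist (f y) (a x r) / ω y) ^ p} := by
    intro y (hy : t * ω y < edist (f y) (a x r))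
    have hωy : ω y ≠ ∞ := fun h => by simp [h, ht] at hy
    refine ENNReal.rpow_le_rpow ?_ hp.le
    exact (ENNReal.le_div_iff_mul_le (.inr (pos_of_gt hy).ne') (.inl hωy)).2 hy.le
  have htp : t ^ p ≠ 0 := (ENNReal.rpow_pos (pos_iff_ne_zero.2 ht) ht').ne'
  have htp' : t ^ p ≠ ∞ := ENNReal.rpow_ne_top_of_nonneg hp.le ht'
  rw [mul_comm, ← div_eq_mul_inv, ENNReal.le_div_iff_mul_le (.inl htp) (.inl htp')]
  calc μ (deviationSet ω f (a x r) t ∩ B) * t ^ p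
      ≤ t ^ p * μ.restrict B (deviationSet ω f (a x r) t) := by
        rw [mul_comm]
        gcongr _ * ?_
        exact Measure.le_restrict_apply B _
    _ ≤ t ^ p * μ.restrict B {y | t ^ p ≤ (edist (f y) (a x r) / ω y) ^ p} := by gcongr
    _ ≤ ∫⁻ y in B, (edist (f y) (a x r) / ω y) ^ p ∂μ := mul_meas_ge_le_lintegral₀ (hmeas x r hr) _
    _ ≤ μ B := hosc x r hr

lemma inv_two_pow_floor_le (s : ℝ) : (2⁻¹ : ℝ) ^ ⌊s⌋₊ ≤ 2 * Real.exp (-(Real.log 2 * s)) := by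
  have hfloor : Real.log 2 * s ≤ Real.log 2 * (⌊s⌋₊ + 1) := by
    gcongr
    exact (Nat.lt_floor_add_one s).le
  calc (2⁻¹ : ℝ) ^ ⌊s⌋₊ = Real.exp (-(Real.log 2 * ⌊s⌋₊)) := by
        rw [Real.exp_neg, Real.exp_mul, Real.exp_log two_pos, Real.rpow_natCast, inv_pow]
    _ ≤ Real.exp (Real.log 2 + -(Real.log 2 * s)) := by
        gcongr
        linarith
    _ = 2 * Real.exp (-(Real.log 2 * s)) := by rw [Real.exp_add, Real.exp_log two_pos]

lemma tailBound_exp {K t : ℝ} (hK : 0 < K) (ht : 0 ≤ t)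
    (h : ∀ k : ℕ, TailBound ν ω f a (k * ENNReal.ofReal K) (2⁻¹ ^ k)) :
    TailBound ν ω f a (ENNReal.ofReal t)
      (ENNReal.ofReal (2 * Real.exp (-(Real.log 2 / K) * t))) := by
  refine (h ⌊t / K⌋₊).mono ?_ ?_
  · rw [← ENNReal.ofReal_natCast, ← ENNReal.ofReal_mul (by positivity)]
    exact ENNReal.ofReal_le_ofReal ((le_div_iff₀ hK).1 (Nat.floor_le (by positivity)))
  · calc (2⁻¹ : ℝ≥0∞) ^ ⌊t / K⌋₊ = ENNReal.ofReal (2⁻¹ ^ ⌊t / K⌋₊) := by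
          rw [ENNReal.ofReal_pow (by positivity), ENNReal.ofReal_inv_of_pos two_pos,
            ENNReal.ofReal_ofNat]
      _ ≤ ENNReal.ofReal (2 * Real.exp (-(Real.log 2 * (t / K)))) :=
          ENNReal.ofReal_le_ofReal (inv_two_pow_floor_le _)
      _ = _ := by ring_nf

variable [ProperSpace X] [BorelSpace X] [IsLocallyFiniteMeasure ν] [ν.IsOpenPosMeasure]

namespace IsA1Weight

lemma ae_edist_le (hω : IsA1Weight ν ω A) {x : X} {r : ℝ} (hr : 0 < r) {b c : Y}
    (hb : ν (deviationSet ω f b s ∩ closedBall x r) ≤ 4⁻¹ * ν (closedBall x r))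
    (hc : ν (deviationSet ω f c s ∩ closedBall x r) ≤ 4⁻¹ * ν (closedBall x r)) :
    ∀ᵐ y ∂ν, y ∈ closedBall x r → edist b c ≤ 4 * A * s * ω y := by
  filter_upwards [hω.ae_measure_closedBall_le x r hr] with y hy hyB
  rw [← ENNReal.mul_le_mul_iff_left (measure_closedBall_pos ν x hr).ne'
    measure_closedBall_lt_top.ne]
  calc edist b c * ν (closedBall x r) ≤ 4 * s * ν.withDensity ω (closedBall x r) :=
        edist_mul_measure_le hω.aemeasurable measure_closedBall_lt_top.ne hb hc
    _ ≤ 4 * s * (A * ω y * ν (closedBall x r)) := by gcongr; exact hy hyB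
    _ = 4 * A * s * ω y * ν (closedBall x r) := by ring

lemma measure_deviationSet_inter_closedBall_le (hω : IsA1Weight ν ω A) (hD : IsDoubling ν D)
    (hδ : A * D ^ 2 * δ ≤ 4⁻¹) (hs : TailBound ν ω f a s δ) {x y : X} {r : ℝ} (hr : 0 < r)
    (hy : y ∈ closedBall x r) :
    ν (deviationSet ω f (a x (2 * r)) s ∩ closedBall y r) ≤ 4⁻¹ * ν (closedBall y r) := by
  rw [mem_closedBall] at hy
  have hyx : closedBall y r ⊆ closedBall x (2 * r) := closedBall_subset_closedBall' (by linarith)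
  have hxy : closedBall x (2 * r) ⊆ closedBall y (4 * r) :=
    closedBall_subset_closedBall' (by rw [dist_comm]; linarith)
  calc ν (deviationSet ω f (a x (2 * r)) s ∩ closedBall y r)
      ≤ ν (deviationSet ω f (a x (2 * r)) s ∩ closedBall x (2 * r)) := by gcongr
    _ ≤ A * δ * ν (closedBall x (2 * r)) :=
        hω.measure_inter_le_of_withDensity_inter_le (by positivity) (hs x _ (by positivity))
    _ ≤ A * δ * (D ^ 2 * ν (closedBall y r)) := by
        gcongr
        exact (measure_mono hxy).trans (hD.measure_closedBall_four_mul_le y hr)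
    _ = A * D ^ 2 * δ * ν (closedBall y r) := by ring
    _ ≤ 4⁻¹ * ν (closedBall y r) := by gcongr

lemma measure_deviationSet_inter_closedBall_self_le (hω : IsA1Weight ν ω A) (hD : IsDoubling ν D)
    (hδ : A * D ^ 2 * δ ≤ 4⁻¹) (hs : TailBound ν ω f a s δ) (x : X) {r : ℝ} (hr : 0 < r) :
    ν (deviationSet ω f (a x r) s ∩ closedBall x r) ≤ 4⁻¹ * ν (closedBall x r) := by
  have : Nonempty X := ⟨x⟩
  have hAδ : A * δ ≤ 4⁻¹ :=
    calc A * δ = A * 1 ^ 2 * δ := by ring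
      _ ≤ A * D ^ 2 * δ := by gcongr; exact_mod_cast hD.one_le
      _ ≤ 4⁻¹ := hδ
  exact (hω.measure_inter_le_of_withDensity_inter_le hr (hs x r hr)).trans (by gcongr)

lemma tsum_measure_closedBall_le (hω : IsA1Weight ν ω A) {θ : ℝ≥0∞} {E S u : Set X} {R : ℝ}
    {ρ : X → ℝ} (hu : IsCZCover ν θ E S R u ρ) :
    θ * ∑' b : u, ν.withDensity ω (closedBall (b : X) (ρ b)) ≤
      A * ν.withDensity ω (E ∩ ⋃ b ∈ u, closedBall b (ρ b)) := by
  set μ := ν.withDensity ω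
  calc θ * ∑' b : u, μ (closedBall (b : X) (ρ b))
      = ∑' b : u, θ * μ (closedBall (b : X) (ρ b)) := ENNReal.tsum_mul_left.symm
    _ ≤ ∑' b : u, A * μ.restrict E (closedBall (b : X) (ρ b)) := by
        refine ENNReal.tsum_le_tsum fun b => ?_
        rw [Measure.restrict_apply measurableSet_closedBall, inter_comm]
        exact hω.mul_measure_closedBall_le_of_le_density (hu.radius_pos b b.2)
          (hu.le_density b b.2)
    _ = A * μ.restrict E (⋃ b ∈ u, closedBall b (ρ b)) := by
        rw [ENNReal.tsum_mul_left, measure_biUnion hu.countable hu.pairwiseDisjoint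
          fun _ _ => measurableSet_closedBall]
    _ = A * μ (E ∩ ⋃ b ∈ u, closedBall b (ρ b)) := by
        rw [Measure.restrict_apply (.biUnion hu.countable fun _ _ => measurableSet_closedBall),
          inter_comm]

lemma ae_exists_mem_deviationSet (hω : IsA1Weight ν ω A) (hD : IsDoubling ν D)
    (hδ : A * D ^ 2 * δ ≤ 4⁻¹) (hs : TailBound ν ω f a s δ) {x : X} {R : ℝ} (hR : 0 < R)
    {u : Set X} {ρ : X → ℝ}
    (hu : IsCZCover ν 4⁻¹ (deviationSet ω f (a x (2 * R)) s) (closedBall x R) R u ρ) :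
    ∀ᵐ y ∂ν, y ∈ deviationSet ω f (a x R) (t + 8 * A * s) ∩ closedBall x R →
      ∃ b ∈ u, y ∈ deviationSet ω f (a b (4 * ρ b)) t ∩ closedBall b (4 * ρ b) := by
  have hclose : ∀ᵐ y ∂ν, y ∈ closedBall x R →
      edist (a x R) (a x (2 * R)) ≤ 4 * A * s * ω y :=
    hω.ae_edist_le hR (hω.measure_deviationSet_inter_closedBall_self_le hD hδ hs x hR)
      (hω.measure_deviationSet_inter_closedBall_le hD hδ hs hR (mem_closedBall_self hR.le))
  have hclose_u : ∀ᵐ y ∂ν, ∀ b ∈ u, y ∈ closedBall b (4 * ρ b) →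
      edist (a x (2 * R)) (a b (4 * ρ b)) ≤ 4 * A * s * ω y := by
    refine (ae_ball_iff hu.countable).2 fun b hb => ?_
    have hρ : 0 < 4 * ρ b := by linarith [hu.radius_pos b hb]
    exact hω.ae_edist_le hρ (hu.density_le b hb)
      (hω.measure_deviationSet_inter_closedBall_self_le hD hδ hs b hρ)
  have : Nonempty X := ⟨x⟩
  have hs_le : s ≤ t + 4 * A * s :=
    calc s = 1 * 1 * s := by ring
      _ ≤ 4 * A * s := by gcongr; exacts [by norm_num, by exact_mod_cast hω.one_le]
      _ ≤ t + 4 * A * s := le_add_self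
  filter_upwards [hclose, hclose_u, hu.ae_covered] with y hy hy_u hcov ⟨hyt, hyB⟩
  have hyE : y ∈ deviationSet ω f (a x (2 * R)) (t + 4 * A * s) := by
    refine mem_deviationSet_of_edist_le ?_ (hy hyB)
    rwa [show t + 4 * A * s + 4 * A * s = t + 8 * A * s by ring]
  obtain ⟨b, hb, hyb⟩ := hcov ⟨deviationSet_anti hs_le hyE, hyB⟩
  exact ⟨b, hb, mem_deviationSet_of_edist_le hyE (hy_u b hb hyb), hyb⟩

theorem tailBound_add (hω : IsA1Weight ν ω A) (hD : IsDoubling ν D)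
    (hδ : A * D ^ 2 * δ ≤ 4⁻¹) (hs : TailBound ν ω f a s δ) (ht : TailBound ν ω f a t q) :
    TailBound ν ω f a (t + 8 * A * s) (4 * A ^ 4 * D ^ 3 * δ * q) := by
  intro x R hR
  set μ := ν.withDensity ω
  have hDμ : IsDoubling μ (A * D) := hω.isDoubling_withDensity hD
  -- The Calderón–Zygmund balls have their centres in `closedBall x R` and may stick out of it, so
  -- deviations are measured from the value assigned to `closedBall x (2 * R)`.
  set E : Set X := deviationSet ω f (a x (2 * R)) s
  obtain ⟨u, ρ, hu⟩ : ∃ u ρ, IsCZCover ν 4⁻¹ E (closedBall x R) R u ρ := by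
    have := hD.isUnifLocDoublingMeasure
    exact exists_isCZCover (by simp) hR fun y hy =>
      hω.measure_deviationSet_inter_closedBall_le hD hδ hs hR hy
  have hsub : ⋃ b ∈ u, closedBall b (ρ b) ⊆ closedBall x (2 * R) := by
    refine iUnion₂_subset fun b hb => closedBall_subset_closedBall' ?_
    linarith [hu.radius_pos b hb, hu.four_mul_radius_le b hb, mem_closedBall.1 (hu.center_mem b hb)]
  have hsum : ∑' b : u, μ (closedBall (b : X) (ρ b)) ≤ 4 * A * (δ * (A * D * μ (closedBall x R))) :=
    calc ∑' b : u, μ (closedBall (b : X) (ρ b))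
        ≤ 4 * (A * μ (E ∩ ⋃ b ∈ u, closedBall b (ρ b))) :=
          (ENNReal.inv_mul_le_iff (by simp) (by simp)).1 (hω.tsum_measure_closedBall_le hu)
      _ ≤ 4 * (A * μ (E ∩ closedBall x (2 * R))) := by gcongr
      _ ≤ 4 * (A * (δ * μ (closedBall x (2 * R)))) := by gcongr; exact hs x _ (by positivity)
      _ ≤ 4 * (A * (δ * (A * D * μ (closedBall x R)))) := by gcongr; exact_mod_cast hDμ x R hR
      _ = _ := by ring
  calc μ (deviationSet ω f (a x R) (t + 8 * A * s) ∩ closedBall x R)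
      ≤ μ (⋃ b ∈ u, deviationSet ω f (a b (4 * ρ b)) t ∩ closedBall b (4 * ρ b)) := by
        refine measure_mono_ae ((withDensity_absolutelyContinuous ν ω).ae_le ?_)
        filter_upwards [hω.ae_exists_mem_deviationSet hD hδ hs hR hu] with y hy hyx
        exact mem_iUnion₂.2 (by simpa only [exists_prop] using hy hyx)
    _ ≤ ∑' b : u, μ (deviationSet ω f (a b (4 * ρ b)) t ∩ closedBall (b : X) (4 * ρ b)) :=
        measure_biUnion_le μ hu.countable _
    _ ≤ ∑' b : u, q * ((A * D) ^ 2 * μ (closedBall (b : X) (ρ b))) := by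
        refine ENNReal.tsum_le_tsum fun b => ?_
        have hρ := hu.radius_pos b b.2
        refine (ht b _ (by positivity)).trans ?_
        gcongr
        exact_mod_cast hDμ.measure_closedBall_four_mul_le b hρ
    _ = q * ((A * D) ^ 2 * ∑' b : u, μ (closedBall (b : X) (ρ b))) := by
        rw [ENNReal.tsum_mul_left, ENNReal.tsum_mul_left]
    _ ≤ q * ((A * D) ^ 2 * (4 * A * (δ * (A * D * μ (closedBall x R))))) := by gcongr
    _ = 4 * A ^ 4 * D ^ 3 * δ * q * μ (closedBall x R) := by ring

lemma mul_sq_mul_le_inv_four [Nonempty X] (hω : IsA1Weight ν ω A) (hD : IsDoubling ν D)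
    (hδ : 8 * A ^ 4 * D ^ 3 * δ ≤ 1) : A * D ^ 2 * δ ≤ 4⁻¹ := by
  have hA : (1 : ℝ≥0∞) ≤ A := by exact_mod_cast hω.one_le
  have hD1 : (1 : ℝ≥0∞) ≤ D := by exact_mod_cast hD.one_le
  rw [ENNReal.le_inv_iff_mul_le]
  calc A * D ^ 2 * δ * 4 = 4 * A ^ 1 * D ^ 2 * δ := by ring
    _ ≤ 8 * A ^ 4 * D ^ 3 * δ := by gcongr <;> first | assumption | norm_num
    _ ≤ 1 := hδ

theorem tailBound_nat_mul (hω : IsA1Weight ν ω A) (hD : IsDoubling ν D)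
    (hδ : 8 * A ^ 4 * D ^ 3 * δ ≤ 1) (hs : TailBound ν ω f a s δ) (k : ℕ) :
    TailBound ν ω f a (k * (8 * A * s)) (2⁻¹ ^ k) := by
  induction k with
  | zero => simpa using tailBound_zero_one
  | succ k ih =>
    intro x
    have : Nonempty X := ⟨x⟩
    refine (hω.tailBound_add hD (hω.mul_sq_mul_le_inv_four hD hδ) hs ih).mono ?_ ?_ x
    · rw [Nat.cast_succ, add_mul, one_mul]
    · rw [pow_succ' (2⁻¹ : ℝ≥0∞) k, ← ENNReal.inv_mul_le_iff (by simp) (by simp), inv_inv]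
      calc 2 * (4 * A ^ 4 * D ^ 3 * δ * 2⁻¹ ^ k) = 8 * A ^ 4 * D ^ 3 * δ * 2⁻¹ ^ k := by ring
        _ ≤ 1 * 2⁻¹ ^ k := by gcongr
        _ = 2⁻¹ ^ k := one_mul _

end IsA1Weight

end TailBound

section Scale

variable {A D : ℝ≥0} {p : ℝ}

/-- The step in height, in the John–Nirenberg iteration for the `p`-oscillation, that halves the
tail of `f`. The factor `(8 A⁴ D³) ^ (1 / p)` is the height at which Chebyshev's inequality makes
the tail small enough to start the iteration. -/
def johnNirenbergScale (A D : ℝ≥0) (p : ℝ) : ℝ :=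
  8 * A * (8 * A ^ 4 * D ^ 3) ^ (1 / p)

lemma johnNirenbergScale_pos (hA : 0 < A) (hD : 0 < D) : 0 < johnNirenbergScale A D p := by
  unfold johnNirenbergScale
  positivity

end Scale

section JohnNirenberg

variable {X Y : Type*} [PseudoMetricSpace X] [ProperSpace X] [MeasurableSpace X] [BorelSpace X]
  [PseudoEMetricSpace Y] {ν : Measure X} [IsLocallyFiniteMeasure ν] [ν.IsOpenPosMeasure]
  {ω : X → ℝ≥0∞} {A D : ℝ≥0} {f : X → Y} {a : X → ℝ → Y}

theorem IsA1Weight.tailBound_exp_of_lintegral_rpow_le (hω : IsA1Weight ν ω A)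
    (hD : IsDoubling ν D) {p t : ℝ} (hp : 0 < p) (ht : 0 ≤ t)
    (hmeas : ∀ x r, 0 < r → AEMeasurable (fun y => (edist (f y) (a x r) / ω y) ^ p)
      ((ν.withDensity ω).restrict (closedBall x r)))
    (hosc : ∀ x r, 0 < r → ∫⁻ y in closedBall x r, (edist (f y) (a x r) / ω y) ^ p
      ∂ν.withDensity ω ≤ ν.withDensity ω (closedBall x r)) :
    TailBound ν ω f a (ENNReal.ofReal t)
      (ENNReal.ofReal (2 * Real.exp (-(Real.log 2 / johnNirenbergScale A D p) * t))) := by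
  intro x
  have : Nonempty X := ⟨x⟩
  have hA0 : 0 < A := one_pos.trans_le hω.one_le
  have hD0 : 0 < D := one_pos.trans_le hD.one_le
  set M : ℝ≥0 := 8 * A ^ 4 * D ^ 3
  have hM : 0 < M := by positivity
  have hbase : TailBound ν ω f a (M ^ (1 / p) : ℝ≥0) ((M : ℝ≥0∞)⁻¹) := by
    have hpow : ((M ^ (1 / p) : ℝ≥0) : ℝ≥0∞) ^ p = M := by
      rw [← ENNReal.coe_rpow_of_nonneg _ hp.le, ← NNReal.rpow_mul, one_div_mul_cancel hp.ne',
        NNReal.rpow_one]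
    rw [← hpow]
    exact tailBound_of_lintegral_rpow_le hp (ENNReal.coe_ne_zero.2 (NNReal.rpow_pos hM).ne')
      ENNReal.coe_ne_top hmeas hosc
  have hδ : 8 * A ^ 4 * D ^ 3 * (M : ℝ≥0∞)⁻¹ ≤ 1 := by
    exact_mod_cast (ENNReal.mul_inv_cancel (ENNReal.coe_ne_zero.2 hM.ne') ENNReal.coe_ne_top).le
  have hscale : ENNReal.ofReal (johnNirenbergScale A D p) = 8 * A * (M ^ (1 / p) : ℝ≥0) := by
    rw [show johnNirenbergScale A D p = (8 * A * M ^ (1 / p) : ℝ≥0) by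
      simp [johnNirenbergScale, M], ENNReal.ofReal_coe_nnreal]
    push_cast
    rfl
  refine tailBound_exp (johnNirenbergScale_pos hA0 hD0) ht (fun k => ?_) x
  rw [hscale]
  exact hω.tailBound_nat_mul hD hδ hbase k

end JohnNirenberg

/-! ### Transfer from sup-norm balls to cubes of Euclidean space -/

section Cube

variable {n : ℕ} {Y : Type*} [PseudoMetricSpace Y] {ω g : Rn n → ℝ} {A : ℝ} {S : Set (Rn n)}

lemma toLp_preimage_cube (x : Fin n → ℝ) {s : ℝ} (hs : 0 ≤ s) :
    WithLp.toLp 2 ⁻¹' cube (WithLp.toLp 2 x) (2 * s) = closedBall x s := by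
  ext y
  rw [mem_closedBall, dist_pi_le_iff hs]
  simp only [mem_preimage, cube, mem_ofPred_eq, mul_div_cancel_left₀ s two_ne_zero, Real.dist_eq]

lemma isCompact_cube (c : Rn n) {ρ : ℝ} (hρ : 0 ≤ ρ) : IsCompact (cube c ρ) := by
  obtain ⟨x, rfl⟩ := WithLp.toLp_surjective 2 c
  obtain ⟨s, rfl⟩ : ∃ s, 2 * s = ρ := ⟨ρ / 2, by ring⟩
  rw [← image_preimage_eq (cube _ _) (WithLp.toLp_surjective 2), toLp_preimage_cube x (by linarith)]
  exact (isCompact_closedBall x s).image (PiLp.continuous_toLp 2 _)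

lemma measurePreserving_toLp_restrict (S : Set (Rn n)) :
    MeasurePreserving (WithLp.toLp 2) (volume.restrict (WithLp.toLp 2 ⁻¹' S))
      ((volume : Measure (Rn n)).restrict S) :=
  (PiLp.volume_preserving_toLp (Fin n)).restrict_preimage_emb
    (MeasurableEquiv.toLp 2 (Fin n → ℝ)).measurableEmbedding S

lemma lintegral_ofReal_toLp (hg : ∀ x, 0 ≤ g x) (hgS : IntegrableOn g S) :
    ∫⁻ y in WithLp.toLp 2 ⁻¹' S, ENNReal.ofReal (g (WithLp.toLp 2 y)) =
      ENNReal.ofReal (∫ x in S, g x) := by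
  rw [ofReal_integral_eq_lintegral_ofReal hgS (.of_forall hg)]
  exact (measurePreserving_toLp_restrict S).lintegral_comp_emb
    (MeasurableEquiv.toLp 2 (Fin n → ℝ)).measurableEmbedding fun x => ENNReal.ofReal (g x)

/-- A real weight on Euclidean space, as an `ℝ≥0∞`-valued weight on `Fin n → ℝ`, whose closed balls
are the cubes with sides parallel to the axes. -/
def supNormWeight (ω : Rn n → ℝ) (y : Fin n → ℝ) : ℝ≥0∞ :=
  ENNReal.ofReal (ω (WithLp.toLp 2 y))

namespace IsA1

lemma nonneg (hω : IsA1 ω A) (x : Rn n) : 0 ≤ ω x := (hω.1 x).le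

lemma integrableOn_cube (hω : IsA1 ω A) (c : Rn n) {ρ : ℝ} (hρ : 0 ≤ ρ) :
    IntegrableOn ω (cube c ρ) :=
  hω.2.1.integrableOn_isCompact (isCompact_cube c hρ)

lemma withDensity_preimage (hω : IsA1 ω A) (hS : IntegrableOn ω S) :
    volume.withDensity (supNormWeight ω) (WithLp.toLp 2 ⁻¹' S) = ENNReal.ofReal (wMeas ω S) := by
  rw [withDensity_apply']
  exact lintegral_ofReal_toLp hω.nonneg hS

lemma withDensity_closedBall (hω : IsA1 ω A) (x : Fin n → ℝ) {s : ℝ} (hs : 0 ≤ s) :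
    volume.withDensity (supNormWeight ω) (closedBall x s) =
      ENNReal.ofReal (wMeas ω (cube (WithLp.toLp 2 x) (2 * s))) := by
  rw [← toLp_preimage_cube x hs, hω.withDensity_preimage (hω.integrableOn_cube _ (by positivity))]

lemma aemeasurable_supNormWeight (hω : IsA1 ω A) : AEMeasurable (supNormWeight ω) :=
  (hω.2.1.aestronglyMeasurable.aemeasurable.comp_quasiMeasurePreserving
    (PiLp.volume_preserving_toLp (Fin n)).quasiMeasurePreserving).ennreal_ofReal

lemma isA1Weight (hω : IsA1 ω A) : IsA1Weight volume (supNormWeight ω) A.toNNReal where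
  aemeasurable := hω.aemeasurable_supNormWeight
  ae_ne_zero := .of_forall fun x => (ENNReal.ofReal_pos.2 (hω.1 _)).ne'
  measure_closedBall_ne_top x r :=
    ne_top_of_le_ne_top (by simp [hω.withDensity_closedBall x (abs_nonneg r)])
      (measure_mono (closedBall_subset_closedBall (le_abs_self r)))
  ae_measure_closedBall_le x r hr := by
    filter_upwards [(PiLp.volume_preserving_toLp (Fin n)).quasiMeasurePreserving.ae
      (hω.2.2.2 (WithLp.toLp 2 x) (2 * r) (by positivity))] with y hy hyB
    rw [← toLp_preimage_cube x hr.le] at hyB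
    rw [hω.withDensity_closedBall x hr.le, Real.volume_pi_closedBall x hr.le, Fintype.card_fin]
    calc ENNReal.ofReal (wMeas ω (cube (WithLp.toLp 2 x) (2 * r)))
        ≤ ENNReal.ofReal (A * ω (WithLp.toLp 2 y) * (2 * r) ^ n) :=
          ENNReal.ofReal_le_ofReal ((div_le_iff₀ (by positivity)).1 (hy hyB))
      _ = A.toNNReal * supNormWeight ω y * ENNReal.ofReal ((2 * r) ^ n) := by
          rw [ENNReal.ofReal_mul' (by positivity), ENNReal.ofReal_mul' (hω.nonneg _)]
          rfl

lemma aemeasurable_of_integrableOn_mul (hω : IsA1 ω A)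
    (hg : IntegrableOn (fun x => g x * ω x) S) :
    AEMeasurable (fun y => ENNReal.ofReal (g (WithLp.toLp 2 y)))
      (volume.restrict (WithLp.toLp 2 ⁻¹' S)) := by
  have hgS : AEMeasurable g (volume.restrict S) :=
    (hg.aemeasurable.div hω.2.1.aestronglyMeasurable.aemeasurable.restrict).congr
      (.of_forall fun x => mul_div_cancel_right₀ (g x) (hω.1 x).ne')
  exact (hgS.comp_quasiMeasurePreserving
    (measurePreserving_toLp_restrict S).quasiMeasurePreserving).ennreal_ofReal

lemma setLIntegral_withDensity_preimage (hω : IsA1 ω A) (hg : ∀ x, 0 ≤ g x)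
    (hgω : IntegrableOn (fun x => g x * ω x) S) :
    ∫⁻ y in WithLp.toLp 2 ⁻¹' S, ENNReal.ofReal (g (WithLp.toLp 2 y))
        ∂volume.withDensity (supNormWeight ω) =
      ENNReal.ofReal (∫ x in S, g x * ω x) := by
  rw [← lintegral_ofReal_toLp (fun x => mul_nonneg (hg x) (hω.nonneg x)) hgω,
    restrict_withDensity', lintegral_withDensity_eq_lintegral_mul₀
      hω.aemeasurable_supNormWeight.restrict (hω.aemeasurable_of_integrableOn_mul hgω)]
  exact lintegral_congr fun y => by
    rw [mul_comm (g _), ENNReal.ofReal_mul (hω.nonneg _)]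
    rfl

lemma edist_div_supNormWeight_rpow (hω : IsA1 ω A) (f : Rn n → Y) (a : Y) {p : ℝ} (hp : 0 ≤ p)
    (y : Fin n → ℝ) :
    (edist (f (WithLp.toLp 2 y)) a / supNormWeight ω y) ^ p =
      ENNReal.ofReal ((dist (f (WithLp.toLp 2 y)) a / ω (WithLp.toLp 2 y)) ^ p) := by
  rw [supNormWeight, edist_dist, ← ENNReal.ofReal_div_of_pos (hω.1 _),
    ENNReal.ofReal_rpow_of_nonneg (div_nonneg dist_nonneg (hω.nonneg _)) hp]

lemma deviationSet_inter_closedBall (hω : IsA1 ω A) (f : Rn n → Y) (a : Y) {t : ℝ} (ht : 0 ≤ t)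
    (x : Fin n → ℝ) {s : ℝ} (hs : 0 ≤ s) :
    deviationSet (supNormWeight ω) (fun y => f (WithLp.toLp 2 y)) a (ENNReal.ofReal t) ∩
        closedBall x s =
      WithLp.toLp 2 ⁻¹' {x' ∈ cube (WithLp.toLp 2 x) (2 * s) | t * ω x' < dist (f x') a} := by
  ext y
  have hdev : ENNReal.ofReal t * supNormWeight ω y < edist (f (WithLp.toLp 2 y)) a ↔
      t * ω (WithLp.toLp 2 y) < dist (f (WithLp.toLp 2 y)) a := by
    rw [supNormWeight, ← ENNReal.ofReal_mul ht, edist_dist,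
      ENNReal.ofReal_lt_ofReal_iff_of_nonneg (mul_nonneg ht (hω.nonneg _))]
  rw [← toLp_preimage_cube x hs, inter_comm]
  exact and_congr_right fun _ => hdev

theorem tailBound_exp_of_setIntegral_rpow_le (hω : IsA1 ω A) {f : Rn n → Y} {cQ : Rn n → ℝ → Y}
    {p t : ℝ} (hp : 0 < p) (ht : 0 ≤ t)
    (hint : ∀ c ρ, 0 < ρ →
      IntegrableOn (fun x => (dist (f x) (cQ c ρ) / ω x) ^ p * ω x) (cube c ρ))
    (hosc : ∀ c ρ, 0 < ρ →
      ∫ x in cube c ρ, (dist (f x) (cQ c ρ) / ω x) ^ p * ω x ≤ wMeas ω (cube c ρ)) :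
    TailBound volume (supNormWeight ω) (fun y => f (WithLp.toLp 2 y))
      (fun y s => cQ (WithLp.toLp 2 y) (2 * s)) (ENNReal.ofReal t)
      (ENNReal.ofReal
        (2 * Real.exp (-(Real.log 2 / johnNirenbergScale A.toNNReal (2 ^ n) p) * t))) := by
  have hosc_nonneg : ∀ (a : Y) x, 0 ≤ (dist (f x) a / ω x) ^ p := fun a x =>
    Real.rpow_nonneg (div_nonneg dist_nonneg (hω.nonneg x)) p
  have hD : IsDoubling (volume : Measure (Fin n → ℝ)) (2 ^ n) := by
    simpa only [Fintype.card_fin] using isDoubling_volume_pi (Fin n)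
  refine hω.isA1Weight.tailBound_exp_of_lintegral_rpow_le hD hp ht
    (fun y s hs => ?measurable) (fun y s hs => ?oscillation)
  all_goals simp only [hω.edist_div_supNormWeight_rpow _ _ hp.le]
  case measurable =>
    rw [← toLp_preimage_cube y hs.le]
    exact (hω.aemeasurable_of_integrableOn_mul (hint _ _ (by positivity))).mono_ac
      ((withDensity_absolutelyContinuous _ _).restrict _)
  case oscillation =>
    rw [hω.withDensity_closedBall y hs.le, ← toLp_preimage_cube y hs.le,
      hω.setLIntegral_withDensity_preimage (hosc_nonneg _) (hint _ _ (by positivity))]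
    exact ENNReal.ofReal_le_ofReal (hosc _ _ (by positivity))

theorem wMeas_sep_le_of_tailBound (hω : IsA1 ω A) {f : Rn n → Y} {cQ : Rn n → ℝ → Y} {t q : ℝ}
    (ht : 0 ≤ t) (hq : 0 ≤ q)
    (h : TailBound volume (supNormWeight ω) (fun y => f (WithLp.toLp 2 y))
      (fun y s => cQ (WithLp.toLp 2 y) (2 * s)) (ENNReal.ofReal t) (ENNReal.ofReal q))
    (c : Rn n) {ρ : ℝ} (hρ : 0 < ρ) :
    wMeas ω {x ∈ cube c ρ | t * ω x < dist (f x) (cQ c ρ)} ≤ q * wMeas ω (cube c ρ) := by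
  obtain ⟨x, rfl⟩ := WithLp.toLp_surjective 2 c
  obtain ⟨s, rfl⟩ : ∃ s, 2 * s = ρ := ⟨ρ / 2, by ring⟩
  have hs : 0 < s := by linarith
  have hcube := hω.integrableOn_cube (WithLp.toLp 2 x) hρ.le
  have htail := h x s hs
  rw [hω.deviationSet_inter_closedBall f _ ht x hs.le, hω.withDensity_closedBall x hs.le,
    hω.withDensity_preimage (hcube.mono_set (sep_subset _ _)), ← ENNReal.ofReal_mul hq] at htail
  exact (ENNReal.ofReal_le_ofReal_iff (mul_nonneg hq (integral_nonneg hω.nonneg))).1 htail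

end IsA1

end Cube

section Integrability

lemma div_rpow_mul_le_add {p a b : ℝ} (hp : 0 ≤ p) (hp1 : p ≤ 1) (ha : 0 ≤ a) (hb : 0 < b) :
    (a / b) ^ p * b ≤ a + b :=
  calc (a / b) ^ p * b ≤ (1 + a / b) ^ p * b := by
        gcongr
        linarith
    _ ≤ (1 + a / b) * b := by
        gcongr
        exact Real.rpow_le_self_of_one_le (le_add_of_nonneg_right (by positivity)) hp1
    _ = a + b := by field_simp; ring

lemma integrable_div_rpow_mul {X : Type*} [MeasurableSpace X] {ν : Measure X} {g w : X → ℝ}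
    (hg : Integrable g ν) (hw : Integrable w ν) (hg0 : ∀ x, 0 ≤ g x) (hw0 : ∀ x, 0 < w x)
    {p : ℝ} (hp : 0 ≤ p) (hp1 : p ≤ 1) :
    Integrable (fun x => (g x / w x) ^ p * w x) ν := by
  refine (hg.add hw).mono' ?_ (.of_forall fun x => ?_)
  · exact (((hg.aemeasurable.div hw.aemeasurable).pow_const p).mul
      hw.aemeasurable).aestronglyMeasurable
  · have hgx := hg0 x
    have hwx := hw0 x
    rw [Real.norm_of_nonneg (by positivity)]
    exact div_rpow_mul_le_add hp hp1 hgx hwx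

lemma IsA1.integrableOn_oscillation {n : ℕ} {ω f : Rn n → ℝ} {A p : ℝ} (hω : IsA1 ω A)
    (hf : LocallyIntegrable f) (hp : 0 ≤ p) (hp1 : p ≤ 1) (c : Rn n) (a : ℝ) {ρ : ℝ}
    (hρ : 0 ≤ ρ) :
    IntegrableOn (fun x => (|f x - a| / ω x) ^ p * ω x) (cube c ρ) := by
  have hfa : IntegrableOn (fun x => |f x - a|) (cube c ρ) :=
    ((hf.sub (locallyIntegrable_const a)).integrableOn_isCompact (isCompact_cube c hρ)).abs
  exact integrable_div_rpow_mul hfa (hω.integrableOn_cube c hρ) (fun _ => abs_nonneg _) hω.1 hp hp1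

end Integrability

end

theorem stmt1_general {Y : Type*} [PseudoMetricSpace Y] (n : ℕ) (r A : ℝ) (hr0 : 0 < r)
    (hA : 1 ≤ A) :
    ∃ c₁ c₂ : ℝ, 0 < c₁ ∧ 0 < c₂ ∧
      ∀ (ω : Rn n → ℝ) (f : Rn n → Y), IsA1 ω A →
        ∀ cQ : Rn n → ℝ → Y,
        (∀ (c : Rn n) (ρ : ℝ), 0 < ρ →
            IntegrableOn (fun x => (dist (f x) (cQ c ρ) / ω x) ^ r * ω x) (cube c ρ)) →
        (∀ (c : Rn n) (ρ : ℝ), 0 < ρ →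
            (∫ x in cube c ρ, (dist (f x) (cQ c ρ) / ω x) ^ r * ω x) ≤ wMeas ω (cube c ρ)) →
        ∀ (c : Rn n) (ρ : ℝ), 0 < ρ → ∀ t : ℝ, 0 < t →
          wMeas ω {x ∈ cube c ρ | t * ω x < dist (f x) (cQ c ρ)} ≤
            c₁ * Real.exp (-c₂ * t) * wMeas ω (cube c ρ) := by
  have hA0 : 0 < A.toNNReal := Real.toNNReal_pos.2 (one_pos.trans_le hA)
  have hK : 0 < johnNirenbergScale A.toNNReal (2 ^ n) r :=
    johnNirenbergScale_pos hA0 (by positivity)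
  refine ⟨2, Real.log 2 / johnNirenbergScale A.toNNReal (2 ^ n) r, two_pos,
    div_pos (Real.log_pos one_lt_two) hK, fun ω f hω cQ hint hosc c ρ hρ t ht => ?_⟩
  exact hω.wMeas_sep_le_of_tailBound ht.le (by positivity)
    (hω.tailBound_exp_of_setIntegral_rpow_le hr0 ht.le hint hosc) c hρ

/-- weighted John–Nirenberg type exponential decay for the `r`-oscillation,
`0 < r < 1`, `ω ∈ A₁`, for `f` with `‖f‖_{BMO_r(ω)} = 1` (expressed at the minimizers `c_Q`). -/
theorem stmt1 (n : ℕ) (r A : ℝ) (hr0 : 0 < r) (hr1 : r < 1) (hA : 1 ≤ A) :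
    ∃ c₁ c₂ : ℝ, 0 < c₁ ∧ 0 < c₂ ∧
      ∀ (ω f : Rn n → ℝ), IsA1 ω A → LocallyIntegrable f volume →
        ∀ cQ : Rn n → ℝ → ℝ,
        -- `cQ c ρ` minimizes `k ↦ ∫_Q (|f-k|/ω)^r dμ` over the cube `Q = cube c ρ`
        (∀ (c : Rn n) (ρ : ℝ), 0 < ρ → ∀ k : ℝ,
            (∫ x in cube c ρ, (|f x - cQ c ρ| / ω x) ^ r * ω x) ≤
              ∫ x in cube c ρ, (|f x - k| / ω x) ^ r * ω x) →
        -- `‖f‖_{BMO_r(ω)} = 1`: every cube oscillation is `≤ 1` ...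
        (∀ (c : Rn n) (ρ : ℝ), 0 < ρ →
            (∫ x in cube c ρ, (|f x - cQ c ρ| / ω x) ^ r * ω x) ≤ wMeas ω (cube c ρ)) →
        -- ... and the supremum over cubes is attained at value `1`
        (∀ ε : ℝ, 0 < ε → ∃ (c : Rn n) (ρ : ℝ), 0 < ρ ∧
            (1 - ε) * wMeas ω (cube c ρ) ≤
              ∫ x in cube c ρ, (|f x - cQ c ρ| / ω x) ^ r * ω x) →
        ∀ (c : Rn n) (ρ : ℝ), 0 < ρ → ∀ t : ℝ, 0 < t →
          wMeas ω {x ∈ cube c ρ | t * ω x < |f x - cQ c ρ|} ≤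
            c₁ * Real.exp (-c₂ * t) * wMeas ω (cube c ρ) := by
  obtain ⟨c₁, c₂, hc₁, hc₂, hdecay⟩ := stmt1_general (Y := ℝ) n r A hr0 hA
  refine ⟨c₁, c₂, hc₁, hc₂, fun ω f hω hf cQ _ hosc _ => hdecay ω f hω cQ (fun c ρ hρ => ?_) hosc⟩
  exact hω.integrableOn_oscillation hf hr0.le hr1.le c (cQ c ρ) hρ.le
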